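/- arXiv:2009.06196 — 6 statements merged into one kernel-verified Lean document; each statement's English description precedes it below -/
import Mathlib

section
/- Let N, n, p, m, m_a, m_f, p_f, q, n_c be natural numbers and fix real matrices A : N×N, B : N×m, S_a : m×m_a, F₁ : N×m_f, F₂ : N×p_f, Nw : N×q, C : p×N, H : N×p, K₁ : N×p, T : N×N, L : N×n, D_ac : n×n_c. Define F := A − H·C·A − K₁·C and K := K₁ + F·H. Let u, a_u, f₁, f₂, ω, a_c, z_p, z_c be arbitrary functions of time with values in the appropriate spaces, with z_p, z_c : ℝ→ℝ^n. Suppose x : ℝ→ℝ^N and z : ℝ→ℝ^N are differentiable with, for every t ∈ ℝ, x'(t) = A·x(t) + B·(u(t) + S_a·a_u(t)) + F₁·f₁(t) + F₂·f₂(t) + Nw·ω(t) and z'(t) = F·z(t) + T·B·(u(t) + S_a·a_u(t)) + K·C·x(t) + L·(z_p(t) − z_c(t) − D_ac·a_c(t)). Then the detector error e := x − z − H·C·x is differentiable and satisfies, for every t ∈ ℝ, e'(t) = F·e(t) + (I − T − H·C)·(B·u(t) + B·S_a·a_u(t)) + (I − H·C)·F₁·f₁(t) + (I − H·C)·F₂·f₂(t)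 + (I − H·C)·Nw·ω(t) − L·(z_p(t) − z_c(t)) + L·D_ac·a_c(t). -/
open Matrix

section

variable {𝕜 : Type*} [NontriviallyNormedField 𝕜]
  {ι κ : Type*} [Fintype κ]

theorem hasDerivAt_const_mulVec (M : Matrix ι κ 𝕜) {x : 𝕜 → κ → 𝕜} {x' : κ → 𝕜} {t : 𝕜}
    (hx : HasDerivAt x x' t) : HasDerivAt (fun s => M *ᵥ x s) (M *ᵥ x') t :=
  hasDerivAt_pi.2 fun i => HasDerivAt.fun_sum fun j _ => (hasDerivAt_pi.1 hx j).const_mul (M i j)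

/-- The Sylvester equation `P A = F P + G` is what makes the estimate of `P x` by `z` exact: the
error `P x - z` is driven by itself and the external inputs only, with no remaining term in `x`. -/
theorem hasDerivAt_luenberger_error [Fintype ι] {A : Matrix κ κ 𝕜} {P G : Matrix ι κ 𝕜}
    {F : Matrix ι ι 𝕜} (sylvester : P * A = F * P + G)
    {x : 𝕜 → κ → 𝕜} {z : 𝕜 → ι → 𝕜} {d : κ → 𝕜} {v : ι → 𝕜} {t : 𝕜}
    (hx : HasDerivAt x (A *ᵥ x t + d) t)
    (hz : HasDerivAt z (F *ᵥ z t + G *ᵥ x t + v) t) :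
    HasDerivAt (fun s => P *ᵥ x s - z s) (F *ᵥ (P *ᵥ x t - z t) + P *ᵥ d - v) t := by
  refine ((hasDerivAt_const_mulVec P hx).sub hz).congr_deriv ?_
  have hPA : P *ᵥ A *ᵥ x t = F *ᵥ P *ᵥ x t + G *ᵥ x t := by
    simp only [mulVec_mulVec, sylvester, add_mulVec]
  rw [mulVec_add, hPA, mulVec_sub]
  abel

end

theorem uio_sylvester_equation {R ι κ : Type*} [Ring R] [Fintype ι] [DecidableEq ι] [Fintype κ]
    {A F : Matrix ι ι R} {C : Matrix κ ι R} {H K₁ K : Matrix ι κ R}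
    (hF : F = A - H * C * A - K₁ * C) (hK : K = K₁ + F * H) :
    (1 - H * C) * A = F * (1 - H * C) + K * C :=
  calc (1 - H * C) * A = F + K₁ * C := by rw [hF, Matrix.sub_mul, Matrix.one_mul]; abel
    _ = F * (1 - H * C) + K * C := by
      rw [hK, Matrix.mul_sub, Matrix.mul_one, Matrix.add_mul, Matrix.mul_assoc F H C]; abel

theorem uio_detector_error_dynamics_general {𝕜 : Type*} [NontriviallyNormedField 𝕜]
    {ι υ α φ ψ π ρ ν γ : Type*} [Fintype ι] [DecidableEq ι] [Fintype υ] [Fintype α] [Fintype φ]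
    [Fintype ψ] [Fintype π] [Fintype ρ] [Fintype ν] [Fintype γ]
    {A T F : Matrix ι ι 𝕜} {B : Matrix ι υ 𝕜} {S_a : Matrix υ α 𝕜} {F₁ : Matrix ι φ 𝕜}
    {F₂ : Matrix ι ψ 𝕜} {Nw : Matrix ι ρ 𝕜} {C : Matrix π ι 𝕜} {H K₁ K : Matrix ι π 𝕜}
    {L : Matrix ι ν 𝕜} {D_ac : Matrix ν γ 𝕜}
    (hF : F = A - H * C * A - K₁ * C) (hK : K = K₁ + F * H)
    {u : υ → 𝕜} {a_u : α → 𝕜} {f₁ : φ → 𝕜} {f₂ : ψ → 𝕜} {ω : ρ → 𝕜} {a_c : γ → 𝕜}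
    {z_p z_c : ν → 𝕜} {x z : 𝕜 → ι → 𝕜} {t : 𝕜}
    (hx : HasDerivAt x
      (A *ᵥ x t + B *ᵥ (u + S_a *ᵥ a_u) + F₁ *ᵥ f₁ + F₂ *ᵥ f₂ + Nw *ᵥ ω) t)
    (hz : HasDerivAt z
      (F *ᵥ z t + (T * B) *ᵥ (u + S_a *ᵥ a_u) + K *ᵥ C *ᵥ x t
        + L *ᵥ (z_p - z_c - D_ac *ᵥ a_c)) t) :
    HasDerivAt (fun s => x s - z s - (H * C) *ᵥ x s)
      (F *ᵥ (x t - z t - (H * C) *ᵥ x t)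
        + (1 - T - H * C) *ᵥ (B *ᵥ u + (B * S_a) *ᵥ a_u)
        + ((1 - H * C) * F₁) *ᵥ f₁ + ((1 - H * C) * F₂) *ᵥ f₂ + ((1 - H * C) * Nw) *ᵥ ω
        - L *ᵥ (z_p - z_c) + (L * D_ac) *ᵥ a_c) t := by
  let d := B *ᵥ (u + S_a *ᵥ a_u) + F₁ *ᵥ f₁ + F₂ *ᵥ f₂ + Nw *ᵥ ω
  let v := (T * B) *ᵥ (u + S_a *ᵥ a_u) + L *ᵥ (z_p - z_c - D_ac *ᵥ a_c)
  have hx_drift : HasDerivAt x (A *ᵥ x t + d) t := hx.congr_deriv (by dsimp only [d]; abel)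
  have hz_drift : HasDerivAt z (F *ᵥ z t + (K * C) *ᵥ x t + v) t :=
    hz.congr_deriv (by dsimp only [v]; rw [mulVec_mulVec]; abel)
  have error_eq (s : 𝕜) : x s - z s - (H * C) *ᵥ x s = (1 - H * C) *ᵥ x s - z s := by
    rw [sub_mulVec, one_mulVec, sub_right_comm]
  have inputs_eq : (1 - H * C) *ᵥ d - v =
      (1 - T - H * C) *ᵥ (B *ᵥ u + (B * S_a) *ᵥ a_u)
        + ((1 - H * C) * F₁) *ᵥ f₁ + ((1 - H * C) * F₂) *ᵥ f₂ + ((1 - H * C) * Nw) *ᵥ ω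
        - L *ᵥ (z_p - z_c) + (L * D_ac) *ᵥ a_c := by
    simp only [d, v, sub_mulVec, mulVec_add, mulVec_sub, ← mulVec_mulVec, one_mulVec]
    abel
  simp only [error_eq]
  refine (hasDerivAt_luenberger_error (uio_sylvester_equation hF hK) hx_drift
    hz_drift).congr_deriv ?_
  rw [add_sub_assoc, inputs_eq]
  abel

/-- UIO-based detector error dynamics (equation (11) of the paper, with the sign
of the `L D_ac a_c` term matching the detector definition): with
`F = A - H C A - K₁ C` and `K = K₁ + F H`, the detector error
`e = x - z - H C x` (i.e. `e = x - x̂` with `x̂ = z + H y_p`, `y_p = C x`)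
satisfies the stated differential equation. -/
theorem uio_detector_error_dynamics {N n p m m_a m_f p_f q n_c : ℕ}
    (A : Matrix (Fin N) (Fin N) ℝ)
    (B : Matrix (Fin N) (Fin m) ℝ)
    (S_a : Matrix (Fin m) (Fin m_a) ℝ)
    (F₁ : Matrix (Fin N) (Fin m_f) ℝ)
    (F₂ : Matrix (Fin N) (Fin p_f) ℝ)
    (Nw : Matrix (Fin N) (Fin q) ℝ)
    (C : Matrix (Fin p) (Fin N) ℝ)
    (H K₁ : Matrix (Fin N) (Fin p) ℝ)
    (T : Matrix (Fin N) (Fin N) ℝ)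
    (L : Matrix (Fin N) (Fin n) ℝ)
    (D_ac : Matrix (Fin n) (Fin n_c) ℝ)
    (F : Matrix (Fin N) (Fin N) ℝ) (K : Matrix (Fin N) (Fin p) ℝ)
    (hF : F = A - H * C * A - K₁ * C)
    (hK : K = K₁ + F * H)
    (u : ℝ → Fin m → ℝ) (a_u : ℝ → Fin m_a → ℝ)
    (f₁ : ℝ → Fin m_f → ℝ) (f₂ : ℝ → Fin p_f → ℝ)
    (ω : ℝ → Fin q → ℝ) (a_c : ℝ → Fin n_c → ℝ)
    (z_p z_c : ℝ → Fin n → ℝ)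
    (x z : ℝ → Fin N → ℝ)
    (hx : ∀ t : ℝ, HasDerivAt x
      (A.mulVec (x t) + B.mulVec (u t + S_a.mulVec (a_u t))
        + F₁.mulVec (f₁ t) + F₂.mulVec (f₂ t) + Nw.mulVec (ω t)) t)
    (hz : ∀ t : ℝ, HasDerivAt z
      (F.mulVec (z t) + (T * B).mulVec (u t + S_a.mulVec (a_u t))
        + K.mulVec (C.mulVec (x t))
        + L.mulVec (z_p t - z_c t - D_ac.mulVec (a_c t))) t) :
    ∀ t : ℝ, HasDerivAt (fun s => x s - z s - (H * C).mulVec (x s))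
      (F.mulVec (x t - z t - (H * C).mulVec (x t))
        + ((1 : Matrix (Fin N) (Fin N) ℝ) - T - H * C).mulVec
            (B.mulVec (u t) + (B * S_a).mulVec (a_u t))
        + (((1 : Matrix (Fin N) (Fin N) ℝ) - H * C) * F₁).mulVec (f₁ t)
        + (((1 : Matrix (Fin N) (Fin N) ℝ) - H * C) * F₂).mulVec (f₂ t)
        + (((1 : Matrix (Fin N) (Fin N) ℝ) - H * C) * Nw).mulVec (ω t)
        - L.mulVec (z_p t - z_c t)
        + (L * D_ac).mulVec (a_c t)) t :=
  fun t => uio_detector_error_dynamics_general hF hK (hx t) (hz t)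
end

section
/- Consider the augmented error dynamics (see context). Assume the design conditions: T = I − H·C, (I − H·C)·F₁ = 0, (I − H·C)·F₂ = 0, L·D_ac = 0, L_p·D_ac = 0, and K_p·D_a = 0. Let (u, a_u, a_y, a_c, f₁, f₂, ω) and (ũ, a_u, ã_y, ã_c, f̃₁, f̃₂, ω) be two collections of signals sharing the same actuator attack a_u and the same noise ω, with a_u and ω continuous. If (e, e_p) solves the augmented error dynamics for the first collection, (ẽ, ẽ_p) solves it for the second collection, and e(0) = ẽ(0), e_p(0) = ẽ_p(0), then e(t) = ẽ(t) and e_p(t) = ẽ_p(t) for all t ≥ 0; in particular the residual C·e(t) = C·ẽ(t) for all t ≥ 0, i.e., the residual is decoupled from u, a_y, a_c, f₁, f₂. -/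
open Matrix

/-- A pair of differentiable functions `(e, e_p)` solves the augmented error
dynamics (equations (12)-(13) of the paper) for the given signals. -/
def SolvesAugmentedErrorDynamics {N n p m m_a m_f p_f q n_c p_a : ℕ}
    (F : Matrix (Fin N) (Fin N) ℝ) (H : Matrix (Fin N) (Fin p) ℝ)
    (C : Matrix (Fin p) (Fin N) ℝ) (T : Matrix (Fin N) (Fin N) ℝ)
    (B : Matrix (Fin N) (Fin m) ℝ) (B_a : Matrix (Fin N) (Fin m_a) ℝ)
    (F₁ : Matrix (Fin N) (Fin m_f) ℝ) (F₂ : Matrix (Fin N) (Fin p_f) ℝ)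
    (Nw : Matrix (Fin N) (Fin q) ℝ) (L : Matrix (Fin N) (Fin n) ℝ)
    (F_p L_p : Matrix (Fin n) (Fin n) ℝ) (T_p : Matrix (Fin n) (Fin N) ℝ)
    (K_p : Matrix (Fin n) (Fin p) ℝ) (D_a : Matrix (Fin p) (Fin p_a) ℝ)
    (D_ac : Matrix (Fin n) (Fin n_c) ℝ)
    (u : ℝ → Fin m → ℝ) (a_u : ℝ → Fin m_a → ℝ) (a_y : ℝ → Fin p_a → ℝ)
    (a_c : ℝ → Fin n_c → ℝ) (f₁ : ℝ → Fin m_f → ℝ) (f₂ : ℝ → Fin p_f → ℝ)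
    (ω : ℝ → Fin q → ℝ)
    (e : ℝ → Fin N → ℝ) (e_p : ℝ → Fin n → ℝ) : Prop :=
  ∀ t : ℝ,
    HasDerivAt e
      (F.mulVec (e t)
        + ((1 : Matrix (Fin N) (Fin N) ℝ) - T - H * C).mulVec
            (B.mulVec (u t) + B_a.mulVec (a_u t))
        + (((1 : Matrix (Fin N) (Fin N) ℝ) - H * C) * F₁).mulVec (f₁ t)
        + (((1 : Matrix (Fin N) (Fin N) ℝ) - H * C) * F₂).mulVec (f₂ t)
        + (((1 : Matrix (Fin N) (Fin N) ℝ) - H * C) * Nw).mulVec (ω t)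
        - L.mulVec (e_p t) - (L * D_ac).mulVec (a_c t)) t
    ∧ HasDerivAt e_p
      ((F_p + L_p).mulVec (e_p t) + (T_p * B_a).mulVec (a_u t)
        - (K_p * D_a).mulVec (a_y t) - (L_p * D_ac).mulVec (a_c t)) t

/-!
The design conditions annihilate the coefficients of `u`, `a_y`, `a_c`, `f₁` and `f₂`, and the
remaining linear system is block triangular: `e_p` is driven by `a_u` alone, while `e` is driven by
`a_u`, `ω` and `e_p`. Two solutions therefore agree first in `e_p` and then, having acquired a
common forcing term, in `e`. Both steps are uniqueness for an affine ODE, whose right-hand side is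
Lipschitz in the state.
-/

theorem eq_of_hasDerivAt_clm_add {E : Type*} [NormedAddCommGroup E] [NormedSpace ℝ E]
    (A : E →L[ℝ] E) (b : ℝ → E) {x y : ℝ → E} {t₀ : ℝ}
    (hx : ∀ t, HasDerivAt x (A (x t) + b t) t) (hy : ∀ t, HasDerivAt y (A (y t) + b t) t)
    (h₀ : x t₀ = y t₀) : x = y := by
  have lipschitz_rhs (t : ℝ) : LipschitzWith ‖A‖₊ (fun z => A z + b t) := by
    simpa only [add_zero] using A.lipschitz.add (LipschitzWith.const (b t))
  exact ODE_solution_unique_univ (s := fun _ => Set.univ)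
    (fun t => (lipschitz_rhs t).lipschitzOnWith)
    (fun t => ⟨hx t, Set.mem_univ _⟩) (fun t => ⟨hy t, Set.mem_univ _⟩) h₀

theorem eq_of_hasDerivAt_mulVec_add {ι : Type*} [Fintype ι] (A : Matrix ι ι ℝ) (b : ℝ → ι → ℝ)
    {x y : ℝ → ι → ℝ} {t₀ : ℝ} (hx : ∀ t, HasDerivAt x (A *ᵥ x t + b t) t)
    (hy : ∀ t, HasDerivAt y (A *ᵥ y t + b t) t) (h₀ : x t₀ = y t₀) : x = y :=
  eq_of_hasDerivAt_clm_add A.mulVecLin.toContinuousLinearMap b hx hy h₀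

section Decoupling

variable {N n p m m_a m_f p_f q n_c p_a : ℕ}
  {F : Matrix (Fin N) (Fin N) ℝ} {H : Matrix (Fin N) (Fin p) ℝ}
  {C : Matrix (Fin p) (Fin N) ℝ} {T : Matrix (Fin N) (Fin N) ℝ}
  {B : Matrix (Fin N) (Fin m) ℝ} {B_a : Matrix (Fin N) (Fin m_a) ℝ}
  {F₁ : Matrix (Fin N) (Fin m_f) ℝ} {F₂ : Matrix (Fin N) (Fin p_f) ℝ}
  {Nw : Matrix (Fin N) (Fin q) ℝ} {L : Matrix (Fin N) (Fin n) ℝ}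
  {F_p L_p : Matrix (Fin n) (Fin n) ℝ} {T_p : Matrix (Fin n) (Fin N) ℝ}
  {K_p : Matrix (Fin n) (Fin p) ℝ} {D_a : Matrix (Fin p) (Fin p_a) ℝ}
  {D_ac : Matrix (Fin n) (Fin n_c) ℝ}
  {u u' : ℝ → Fin m → ℝ} {a_u : ℝ → Fin m_a → ℝ} {a_y a_y' : ℝ → Fin p_a → ℝ}
  {a_c a_c' : ℝ → Fin n_c → ℝ} {f₁ f₁' : ℝ → Fin m_f → ℝ} {f₂ f₂' : ℝ → Fin p_f → ℝ}
  {ω : ℝ → Fin q → ℝ} {e e' : ℝ → Fin N → ℝ} {e_p e_p' : ℝ → Fin n → ℝ}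

theorem SolvesAugmentedErrorDynamics.hasDerivAt_e
    (hsol : SolvesAugmentedErrorDynamics F H C T B B_a F₁ F₂ Nw L F_p L_p T_p
      K_p D_a D_ac u a_u a_y a_c f₁ f₂ ω e e_p)
    (hB : (1 - T - H * C) * B = 0) (hF₁ : (1 - H * C) * F₁ = 0) (hF₂ : (1 - H * C) * F₂ = 0)
    (hL : L * D_ac = 0) (t : ℝ) :
    HasDerivAt e
      (F *ᵥ e t + (((1 - T - H * C) * B_a) *ᵥ a_u t + ((1 - H * C) * Nw) *ᵥ ω t - L *ᵥ e_p t))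
      t := by
  simpa only [mulVec_add, mulVec_mulVec, hB, hF₁, hF₂, hL, zero_mulVec, zero_add, add_zero,
    sub_zero, add_assoc, add_sub_assoc] using (hsol t).1

theorem SolvesAugmentedErrorDynamics.hasDerivAt_e_p
    (hsol : SolvesAugmentedErrorDynamics F H C T B B_a F₁ F₂ Nw L F_p L_p T_p
      K_p D_a D_ac u a_u a_y a_c f₁ f₂ ω e e_p)
    (hLp : L_p * D_ac = 0) (hKp : K_p * D_a = 0) (t : ℝ) :
    HasDerivAt e_p ((F_p + L_p) *ᵥ e_p t + (T_p * B_a) *ᵥ a_u t) t := by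
  simpa only [hLp, hKp, zero_mulVec, sub_zero] using (hsol t).2

theorem actuator_attack_residual_decoupled_general
    (hB : (1 - T - H * C) * B = 0) (hF₁ : (1 - H * C) * F₁ = 0) (hF₂ : (1 - H * C) * F₂ = 0)
    (hL : L * D_ac = 0) (hLp : L_p * D_ac = 0) (hKp : K_p * D_a = 0)
    (hsol : SolvesAugmentedErrorDynamics F H C T B B_a F₁ F₂ Nw L F_p L_p T_p
      K_p D_a D_ac u a_u a_y a_c f₁ f₂ ω e e_p)
    (hsol' : SolvesAugmentedErrorDynamics F H C T B B_a F₁ F₂ Nw L F_p L_p T_p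
      K_p D_a D_ac u' a_u a_y' a_c' f₁' f₂' ω e' e_p')
    {t₀ : ℝ} (h₀ : e t₀ = e' t₀) (h₀p : e_p t₀ = e_p' t₀) :
    e = e' ∧ e_p = e_p' := by
  obtain rfl : e_p = e_p' :=
    eq_of_hasDerivAt_mulVec_add _ _ (hsol.hasDerivAt_e_p hLp hKp)
      (hsol'.hasDerivAt_e_p hLp hKp) h₀p
  have he : e = e' :=
    eq_of_hasDerivAt_mulVec_add _ _ (hsol.hasDerivAt_e hB hF₁ hF₂ hL)
      (hsol'.hasDerivAt_e hB hF₁ hF₂ hL) h₀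
  exact ⟨he, rfl⟩

end Decoupling

/-- Proposition 1 (decoupling of the residual res_AA): under the design
conditions, two solutions of the augmented error dynamics sharing the same
(continuous) actuator attack a_u and noise ω, with the same initial error state,
coincide for all t ≥ 0; in particular the residual C·e is decoupled from
u, a_y, a_c, f₁, f₂. -/
theorem actuator_attack_residual_decoupled {N n p m m_a m_f p_f q n_c p_a : ℕ}
    (F : Matrix (Fin N) (Fin N) ℝ) (H : Matrix (Fin N) (Fin p) ℝ)
    (C : Matrix (Fin p) (Fin N) ℝ) (T : Matrix (Fin N) (Fin N) ℝ)
    (B : Matrix (Fin N) (Fin m) ℝ) (B_a : Matrix (Fin N) (Fin m_a) ℝ)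
    (F₁ : Matrix (Fin N) (Fin m_f) ℝ) (F₂ : Matrix (Fin N) (Fin p_f) ℝ)
    (Nw : Matrix (Fin N) (Fin q) ℝ) (L : Matrix (Fin N) (Fin n) ℝ)
    (F_p L_p : Matrix (Fin n) (Fin n) ℝ) (T_p : Matrix (Fin n) (Fin N) ℝ)
    (K_p : Matrix (Fin n) (Fin p) ℝ) (D_a : Matrix (Fin p) (Fin p_a) ℝ)
    (D_ac : Matrix (Fin n) (Fin n_c) ℝ)
    (hT : T = (1 : Matrix (Fin N) (Fin N) ℝ) - H * C)
    (hF₁ : ((1 : Matrix (Fin N) (Fin N) ℝ) - H * C) * F₁ = 0)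
    (hF₂ : ((1 : Matrix (Fin N) (Fin N) ℝ) - H * C) * F₂ = 0)
    (hL : L * D_ac = 0)
    (hLp : L_p * D_ac = 0)
    (hKp : K_p * D_a = 0)
    (u u' : ℝ → Fin m → ℝ) (a_u : ℝ → Fin m_a → ℝ)
    (a_y a_y' : ℝ → Fin p_a → ℝ) (a_c a_c' : ℝ → Fin n_c → ℝ)
    (f₁ f₁' : ℝ → Fin m_f → ℝ) (f₂ f₂' : ℝ → Fin p_f → ℝ)
    (ω : ℝ → Fin q → ℝ)
    (hau_cont : Continuous a_u) (hω_cont : Continuous ω)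
    (e e' : ℝ → Fin N → ℝ) (e_p e_p' : ℝ → Fin n → ℝ)
    (hsol : SolvesAugmentedErrorDynamics F H C T B B_a F₁ F₂ Nw L F_p L_p T_p
      K_p D_a D_ac u a_u a_y a_c f₁ f₂ ω e e_p)
    (hsol' : SolvesAugmentedErrorDynamics F H C T B B_a F₁ F₂ Nw L F_p L_p T_p
      K_p D_a D_ac u' a_u a_y' a_c' f₁' f₂' ω e' e_p')
    (h0 : e 0 = e' 0) (h0p : e_p 0 = e_p' 0) :
    ∀ t : ℝ, 0 ≤ t → e t = e' t ∧ e_p t = e_p' t := by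
  obtain ⟨rfl, rfl⟩ := actuator_attack_residual_decoupled_general
    (by rw [hT, sub_sub_cancel, sub_self, Matrix.zero_mul]) hF₁ hF₂ hL hLp hKp hsol hsol' h0 h0p
  exact fun _ _ => ⟨rfl, rfl⟩
end

section
/- Consider the augmented error dynamics (see context). Assume the design conditions: T = I − H·C, (I − H·C)·F₁ = 0, (I − H·C)·F₂ = 0, L·D_ac = 0, L_p·D_ac = 0, and T_p·B_a = 0. Let (u, a_u, a_y, a_c, f₁, f₂, ω) and (ũ, ã_u, a_y, ã_c, f̃₁, f̃₂, ω) be two collections of signals sharing the same sensor attack a_y and the same noise ω, with a_y and ω continuous. If (e, e_p) solves the augmented error dynamics for the first collection, (ẽ, ẽ_p) solves it for the second collection, and e(0) = ẽ(0), e_p(0) = ẽ_p(0), then e(t) = ẽ(t) and e_p(t) = ẽ_p(t) for all t ≥ 0; in particular the residual C·e(t) = C·ẽ(t) for all t ≥ 0, i.e., the residual is decoupled from u, a_u, a_c, f₁, f₂. -/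
open Matrix

section LinearODE

variable {E : Type*} [NormedAddCommGroup E] [NormedSpace ℝ E]

theorem linear_ODE_solution_unique (A : E →L[ℝ] E) {g x y : ℝ → E} {t₀ : ℝ}
    (hx : ∀ t, HasDerivAt x (A (x t) + g t) t) (hy : ∀ t, HasDerivAt y (A (y t) + g t) t)
    (h₀ : x t₀ = y t₀) : x = y := by
  have lipschitz_field (t : ℝ) : LipschitzOnWith ‖A‖₊ (fun z ↦ A z + g t) Set.univ := by
    simpa only [add_zero] using (A.lipschitz.add (LipschitzWith.const (g t))).lipschitzOnWith
  exact ODE_solution_unique_univ (s := fun _ ↦ Set.univ) lipschitz_field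
    (fun t ↦ ⟨hx t, Set.mem_univ _⟩) (fun t ↦ ⟨hy t, Set.mem_univ _⟩) h₀

theorem matrix_linear_ODE_solution_unique {ι : Type*} [Fintype ι] (A : Matrix ι ι ℝ)
    {g x y : ℝ → ι → ℝ} {t₀ : ℝ}
    (hx : ∀ t, HasDerivAt x (A *ᵥ x t + g t) t) (hy : ∀ t, HasDerivAt y (A *ᵥ y t + g t) t)
    (h₀ : x t₀ = y t₀) : x = y :=
  linear_ODE_solution_unique A.mulVecLin.toContinuousLinearMap hx hy h₀

end LinearODE

section ReducedDynamics

variable {ι κ α β : Type*} [Fintype ι] [Fintype κ] [Fintype α] [Fintype β]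

/-- The reduced error dynamics, what remains of `SolvesAugmentedErrorDynamics` under the design
conditions: a cascade in which `e_p` evolves autonomously, up to the forcing `a_y`, and drives `e`.
The matrices `G`, `M` and `K` stand for the paper's `(I - H C) Nw`, `F_p + L_p` and `K_p D_a`. -/
def SolvesReducedErrorDynamics (F : Matrix ι ι ℝ) (G : Matrix ι α ℝ) (L : Matrix ι κ ℝ)
    (M : Matrix κ κ ℝ) (K : Matrix κ β ℝ) (a_y : ℝ → β → ℝ) (ω : ℝ → α → ℝ)
    (e : ℝ → ι → ℝ) (e_p : ℝ → κ → ℝ) : Prop :=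
  ∀ t : ℝ, HasDerivAt e (F *ᵥ e t + G *ᵥ ω t - L *ᵥ e_p t) t ∧
    HasDerivAt e_p (M *ᵥ e_p t - K *ᵥ a_y t) t

theorem SolvesReducedErrorDynamics.unique {F : Matrix ι ι ℝ} {G : Matrix ι α ℝ}
    {L : Matrix ι κ ℝ} {M : Matrix κ κ ℝ} {K : Matrix κ β ℝ} {a_y : ℝ → β → ℝ} {ω : ℝ → α → ℝ}
    {e e' : ℝ → ι → ℝ} {e_p e_p' : ℝ → κ → ℝ} {t₀ : ℝ}
    (hsol : SolvesReducedErrorDynamics F G L M K a_y ω e e_p)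
    (hsol' : SolvesReducedErrorDynamics F G L M K a_y ω e' e_p')
    (h₀ : e t₀ = e' t₀) (h₀p : e_p t₀ = e_p' t₀) : e = e' ∧ e_p = e_p' := by
  have e_p_eq : e_p = e_p' := by
    refine matrix_linear_ODE_solution_unique M (g := fun t ↦ -(K *ᵥ a_y t)) ?_ ?_ h₀p
    · simpa only [sub_eq_add_neg] using fun t ↦ (hsol t).2
    · simpa only [sub_eq_add_neg] using fun t ↦ (hsol' t).2
  subst e_p_eq
  have e_eq : e = e' := by
    refine matrix_linear_ODE_solution_unique F (g := fun t ↦ G *ᵥ ω t - L *ᵥ e_p t) ?_ ?_ h₀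
    · simpa only [add_sub_assoc] using fun t ↦ (hsol t).1
    · simpa only [add_sub_assoc] using fun t ↦ (hsol' t).1
  exact ⟨e_eq, rfl⟩

end ReducedDynamics

section Decoupling

variable {N n p m m_a m_f p_f q n_c p_a : ℕ}
  {F : Matrix (Fin N) (Fin N) ℝ} {H : Matrix (Fin N) (Fin p) ℝ}
  {C : Matrix (Fin p) (Fin N) ℝ} {T : Matrix (Fin N) (Fin N) ℝ}
  {B : Matrix (Fin N) (Fin m) ℝ} {B_a : Matrix (Fin N) (Fin m_a) ℝ}
  {F₁ : Matrix (Fin N) (Fin m_f) ℝ} {F₂ : Matrix (Fin N) (Fin p_f) ℝ}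
  {Nw : Matrix (Fin N) (Fin q) ℝ} {L : Matrix (Fin N) (Fin n) ℝ}
  {F_p L_p : Matrix (Fin n) (Fin n) ℝ} {T_p : Matrix (Fin n) (Fin N) ℝ}
  {K_p : Matrix (Fin n) (Fin p) ℝ} {D_a : Matrix (Fin p) (Fin p_a) ℝ}
  {D_ac : Matrix (Fin n) (Fin n_c) ℝ}
  {u u' : ℝ → Fin m → ℝ} {a_u a_u' : ℝ → Fin m_a → ℝ} {a_y : ℝ → Fin p_a → ℝ}
  {a_c a_c' : ℝ → Fin n_c → ℝ} {f₁ f₁' : ℝ → Fin m_f → ℝ} {f₂ f₂' : ℝ → Fin p_f → ℝ}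
  {ω : ℝ → Fin q → ℝ} {e e' : ℝ → Fin N → ℝ} {e_p e_p' : ℝ → Fin n → ℝ} {t₀ : ℝ}

theorem SolvesAugmentedErrorDynamics.solvesReducedErrorDynamics
    (hsol : SolvesAugmentedErrorDynamics F H C T B B_a F₁ F₂ Nw L F_p L_p T_p
      K_p D_a D_ac u a_u a_y a_c f₁ f₂ ω e e_p)
    (hT : T = 1 - H * C) (hF₁ : (1 - H * C) * F₁ = 0) (hF₂ : (1 - H * C) * F₂ = 0)
    (hL : L * D_ac = 0) (hLp : L_p * D_ac = 0) (hTp : T_p * B_a = 0) :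
    SolvesReducedErrorDynamics F ((1 - H * C) * Nw) L (F_p + L_p) (K_p * D_a) a_y ω e e_p := by
  have input_gain_eq_zero : 1 - T - H * C = 0 := by rw [hT]; abel
  simpa only [SolvesAugmentedErrorDynamics, SolvesReducedErrorDynamics, input_gain_eq_zero,
    hF₁, hF₂, hL, hLp, hTp, zero_mulVec, add_zero, sub_zero] using hsol

theorem sensor_attack_residual_decoupled_general
    (hT : T = 1 - H * C) (hF₁ : (1 - H * C) * F₁ = 0) (hF₂ : (1 - H * C) * F₂ = 0)
    (hL : L * D_ac = 0) (hLp : L_p * D_ac = 0) (hTp : T_p * B_a = 0)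
    (hsol : SolvesAugmentedErrorDynamics F H C T B B_a F₁ F₂ Nw L F_p L_p T_p
      K_p D_a D_ac u a_u a_y a_c f₁ f₂ ω e e_p)
    (hsol' : SolvesAugmentedErrorDynamics F H C T B B_a F₁ F₂ Nw L F_p L_p T_p
      K_p D_a D_ac u' a_u' a_y a_c' f₁' f₂' ω e' e_p')
    (h₀ : e t₀ = e' t₀) (h₀p : e_p t₀ = e_p' t₀) : e = e' ∧ e_p = e_p' :=
  (hsol.solvesReducedErrorDynamics hT hF₁ hF₂ hL hLp hTp).unique
    (hsol'.solvesReducedErrorDynamics hT hF₁ hF₂ hL hLp hTp) h₀ h₀p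

end Decoupling

/-- Proposition 2 (decoupling of the residual res_SA): under the design
conditions, two solutions of the augmented error dynamics sharing the same
(continuous) sensor attack a_y and noise ω, with the same initial error state,
coincide for all t ≥ 0; in particular the residual C·e is decoupled from
u, a_u, a_c, f₁, f₂. -/
theorem sensor_attack_residual_decoupled {N n p m m_a m_f p_f q n_c p_a : ℕ}
    (F : Matrix (Fin N) (Fin N) ℝ) (H : Matrix (Fin N) (Fin p) ℝ)
    (C : Matrix (Fin p) (Fin N) ℝ) (T : Matrix (Fin N) (Fin N) ℝ)
    (B : Matrix (Fin N) (Fin m) ℝ) (B_a : Matrix (Fin N) (Fin m_a) ℝ)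
    (F₁ : Matrix (Fin N) (Fin m_f) ℝ) (F₂ : Matrix (Fin N) (Fin p_f) ℝ)
    (Nw : Matrix (Fin N) (Fin q) ℝ) (L : Matrix (Fin N) (Fin n) ℝ)
    (F_p L_p : Matrix (Fin n) (Fin n) ℝ) (T_p : Matrix (Fin n) (Fin N) ℝ)
    (K_p : Matrix (Fin n) (Fin p) ℝ) (D_a : Matrix (Fin p) (Fin p_a) ℝ)
    (D_ac : Matrix (Fin n) (Fin n_c) ℝ)
    (hT : T = (1 : Matrix (Fin N) (Fin N) ℝ) - H * C)
    (hF₁ : ((1 : Matrix (Fin N) (Fin N) ℝ) - H * C) * F₁ = 0)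
    (hF₂ : ((1 : Matrix (Fin N) (Fin N) ℝ) - H * C) * F₂ = 0)
    (hL : L * D_ac = 0)
    (hLp : L_p * D_ac = 0)
    (hTp : T_p * B_a = 0)
    (u u' : ℝ → Fin m → ℝ) (a_u a_u' : ℝ → Fin m_a → ℝ)
    (a_y : ℝ → Fin p_a → ℝ) (a_c a_c' : ℝ → Fin n_c → ℝ)
    (f₁ f₁' : ℝ → Fin m_f → ℝ) (f₂ f₂' : ℝ → Fin p_f → ℝ)
    (ω : ℝ → Fin q → ℝ)
    (hay_cont : Continuous a_y) (hω_cont : Continuous ω)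
    (e e' : ℝ → Fin N → ℝ) (e_p e_p' : ℝ → Fin n → ℝ)
    (hsol : SolvesAugmentedErrorDynamics F H C T B B_a F₁ F₂ Nw L F_p L_p T_p
      K_p D_a D_ac u a_u a_y a_c f₁ f₂ ω e e_p)
    (hsol' : SolvesAugmentedErrorDynamics F H C T B B_a F₁ F₂ Nw L F_p L_p T_p
      K_p D_a D_ac u' a_u' a_y a_c' f₁' f₂' ω e' e_p')
    (h0 : e 0 = e' 0) (h0p : e_p 0 = e_p' 0) :
    ∀ t : ℝ, 0 ≤ t → e t = e' t ∧ e_p t = e_p' t := by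
  obtain ⟨e_eq, e_p_eq⟩ :=
    sensor_attack_residual_decoupled_general hT hF₁ hF₂ hL hLp hTp hsol hsol' h0 h0p
  exact fun t _ ↦ ⟨congrFun e_eq t, congrFun e_p_eq t⟩
end

section
/- Consider the augmented error dynamics (see context). Assume the design conditions: L = 0, T = I − H·C, and (I − H·C)·F₁ = 0. Let (u, a_u, a_y, a_c, f₁, f₂, ω) and (ũ, ã_u, ã_y, ã_c, f̃₁, f₂, ω) be two collections of signals sharing the same pseudo actuator fault f₂ and the same noise ω, with f₂ and ω continuous. If (e, e_p) solves the augmented error dynamics for the first collection, (ẽ, ẽ_p) solves it for the second collection, and e(0) = ẽ(0), then e(t) = ẽ(t) for all t ≥ 0; in particular the residual C·e(t) = C·ẽ(t) for all t ≥ 0, i.e., the residual is decoupled from u, a_u, a_y, a_c, f₁. -/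
open Matrix

/-!
The condition `L = 0` cuts the detector error off from the pseudo observer and from `a_c`,
`T = I - H C` removes the input channel and `(I - H C) F₁ = 0` the actuator fault channel. What
remains is `ė = F e + (I - H C) (F₂ f₂ + Nw ω)`: both errors satisfy this one equation, whose
right-hand side is Lipschitz in the state uniformly in time, so equal initial values force equality.
-/

section ForcedODE

theorem eq_of_hasDerivAt_add_forcing {E : Type*} [NormedAddCommGroup E] [NormedSpace ℝ E]
    {K : NNReal} {v : E → E} (hv : LipschitzWith K v) {g x y : ℝ → E} {t₀ : ℝ}
    (hx : ∀ t, HasDerivAt x (v (x t) + g t) t) (hy : ∀ t, HasDerivAt y (v (y t) + g t) t)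
    (h₀ : x t₀ = y t₀) : x = y := by
  have lipschitz_field (t : ℝ) : LipschitzOnWith (K + 0) (fun z ↦ v z + g t) Set.univ :=
    (hv.add (LipschitzWith.const (g t))).lipschitzOnWith
  exact ODE_solution_unique_univ lipschitz_field (fun t ↦ ⟨hx t, Set.mem_univ _⟩)
    (fun t ↦ ⟨hy t, Set.mem_univ _⟩) h₀

theorem eq_of_hasDerivAt_mulVec_add_forcing {ι : Type*} [Fintype ι] {A : Matrix ι ι ℝ}
    {g x y : ℝ → ι → ℝ} {t₀ : ℝ} (hx : ∀ t, HasDerivAt x (A *ᵥ x t + g t) t)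
    (hy : ∀ t, HasDerivAt y (A *ᵥ y t + g t) t) (h₀ : x t₀ = y t₀) : x = y :=
  eq_of_hasDerivAt_add_forcing A.mulVecLin.toContinuousLinearMap.lipschitz hx hy h₀

end ForcedODE

section SensorFaultResidual

variable {N n p m m_a m_f p_f q n_c p_a : ℕ}
  {F : Matrix (Fin N) (Fin N) ℝ} {H : Matrix (Fin N) (Fin p) ℝ}
  {C : Matrix (Fin p) (Fin N) ℝ} {T : Matrix (Fin N) (Fin N) ℝ}
  {B : Matrix (Fin N) (Fin m) ℝ} {B_a : Matrix (Fin N) (Fin m_a) ℝ}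
  {F₁ : Matrix (Fin N) (Fin m_f) ℝ} {F₂ : Matrix (Fin N) (Fin p_f) ℝ}
  {Nw : Matrix (Fin N) (Fin q) ℝ} {L : Matrix (Fin N) (Fin n) ℝ}
  {F_p L_p : Matrix (Fin n) (Fin n) ℝ} {T_p : Matrix (Fin n) (Fin N) ℝ}
  {K_p : Matrix (Fin n) (Fin p) ℝ} {D_a : Matrix (Fin p) (Fin p_a) ℝ}
  {D_ac : Matrix (Fin n) (Fin n_c) ℝ}
  {u u' : ℝ → Fin m → ℝ} {a_u a_u' : ℝ → Fin m_a → ℝ}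
  {a_y a_y' : ℝ → Fin p_a → ℝ} {a_c a_c' : ℝ → Fin n_c → ℝ}
  {f₁ f₁' : ℝ → Fin m_f → ℝ} {f₂ : ℝ → Fin p_f → ℝ} {ω : ℝ → Fin q → ℝ}
  {e e' : ℝ → Fin N → ℝ} {e_p e_p' : ℝ → Fin n → ℝ}

theorem SolvesAugmentedErrorDynamics.hasDerivAt_detectorError
    (hsol : SolvesAugmentedErrorDynamics F H C T B B_a F₁ F₂ Nw L F_p L_p T_p
      K_p D_a D_ac u a_u a_y a_c f₁ f₂ ω e e_p)
    (hL : L = 0) (hT : T = 1 - H * C) (hF₁ : (1 - H * C) * F₁ = 0) (t : ℝ) :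
    HasDerivAt e
      (F *ᵥ e t + (((1 - H * C) * F₂) *ᵥ f₂ t + ((1 - H * C) * Nw) *ᵥ ω t)) t := by
  have input_gain_eq_zero : 1 - T - H * C = 0 := by rw [hT]; abel
  have h := (hsol t).1
  rw [input_gain_eq_zero, hF₁, hL] at h
  simpa only [Matrix.zero_mul, zero_mulVec, add_zero, sub_zero, add_assoc] using h

theorem sensor_fault_residual_decoupled_general
    (hL : L = 0) (hT : T = 1 - H * C) (hF₁ : (1 - H * C) * F₁ = 0)
    (hsol : SolvesAugmentedErrorDynamics F H C T B B_a F₁ F₂ Nw L F_p L_p T_p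
      K_p D_a D_ac u a_u a_y a_c f₁ f₂ ω e e_p)
    (hsol' : SolvesAugmentedErrorDynamics F H C T B B_a F₁ F₂ Nw L F_p L_p T_p
      K_p D_a D_ac u' a_u' a_y' a_c' f₁' f₂ ω e' e_p')
    {t₀ : ℝ} (h₀ : e t₀ = e' t₀) : e = e' :=
  eq_of_hasDerivAt_mulVec_add_forcing (hsol.hasDerivAt_detectorError hL hT hF₁)
    (hsol'.hasDerivAt_detectorError hL hT hF₁) h₀

end SensorFaultResidual

/-- Proposition 4 (decoupling of the residual res_SF): under the design
conditions L = 0, T = I - H C, (I - H C) F₁ = 0, two solutions of the augmented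
error dynamics sharing the same (continuous) pseudo actuator fault f₂ and noise
ω, with the same initial detector error, have identical detector errors for all
t ≥ 0; in particular the residual C·e is decoupled from u, a_u, a_y, a_c, f₁. -/
theorem sensor_fault_residual_decoupled {N n p m m_a m_f p_f q n_c p_a : ℕ}
    (F : Matrix (Fin N) (Fin N) ℝ) (H : Matrix (Fin N) (Fin p) ℝ)
    (C : Matrix (Fin p) (Fin N) ℝ) (T : Matrix (Fin N) (Fin N) ℝ)
    (B : Matrix (Fin N) (Fin m) ℝ) (B_a : Matrix (Fin N) (Fin m_a) ℝ)
    (F₁ : Matrix (Fin N) (Fin m_f) ℝ) (F₂ : Matrix (Fin N) (Fin p_f) ℝ)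
    (Nw : Matrix (Fin N) (Fin q) ℝ) (L : Matrix (Fin N) (Fin n) ℝ)
    (F_p L_p : Matrix (Fin n) (Fin n) ℝ) (T_p : Matrix (Fin n) (Fin N) ℝ)
    (K_p : Matrix (Fin n) (Fin p) ℝ) (D_a : Matrix (Fin p) (Fin p_a) ℝ)
    (D_ac : Matrix (Fin n) (Fin n_c) ℝ)
    (hL : L = 0)
    (hT : T = (1 : Matrix (Fin N) (Fin N) ℝ) - H * C)
    (hF₁ : ((1 : Matrix (Fin N) (Fin N) ℝ) - H * C) * F₁ = 0)
    (u u' : ℝ → Fin m → ℝ) (a_u a_u' : ℝ → Fin m_a → ℝ)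
    (a_y a_y' : ℝ → Fin p_a → ℝ) (a_c a_c' : ℝ → Fin n_c → ℝ)
    (f₁ f₁' : ℝ → Fin m_f → ℝ) (f₂ : ℝ → Fin p_f → ℝ)
    (ω : ℝ → Fin q → ℝ)
    (hf₂_cont : Continuous f₂) (hω_cont : Continuous ω)
    (e e' : ℝ → Fin N → ℝ) (e_p e_p' : ℝ → Fin n → ℝ)
    (hsol : SolvesAugmentedErrorDynamics F H C T B B_a F₁ F₂ Nw L F_p L_p T_p
      K_p D_a D_ac u a_u a_y a_c f₁ f₂ ω e e_p)
    (hsol' : SolvesAugmentedErrorDynamics F H C T B B_a F₁ F₂ Nw L F_p L_p T_p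
      K_p D_a D_ac u' a_u' a_y' a_c' f₁' f₂ ω e' e_p')
    (h0 : e 0 = e' 0) :
    ∀ t : ℝ, 0 ≤ t → e t = e' t :=
  fun t _ ↦
    congrFun (sensor_fault_residual_decoupled_general hL hT hF₁ hsol hsol' h0) t
end

section
/- Let V be a finite-dimensional real vector space of dimension d, let F : V → V and L : V → W be linear maps (W a real vector space), and let B be a subspace of V. Define 𝒱₀ = ker L, 𝒱_{k+1} = ker L ∩ F⁻¹(𝒱_k + B), and 𝒲₀ = B, 𝒲_{k+1} = B + F(𝒲_k ∩ ker L). If ker L ∩ B = {0}, then 𝒱_d ∩ 𝒲_d = {0}. -/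
section SubspaceIterates

variable {R V : Type*} [Semiring R] [AddCommMonoid V] [Module R V]
  {F : V →ₗ[R] V} {K B : Submodule R V} {𝒱 𝒲 : ℕ → Submodule R V}

theorem weaklyUnobservable_le (hV0 : 𝒱 0 = K)
    (hVsucc : ∀ k, 𝒱 (k + 1) = K ⊓ Submodule.comap F (𝒱 k ⊔ B)) : ∀ k, 𝒱 k ≤ K
  | 0 => hV0.le
  | k + 1 => (hVsucc k).trans_le inf_le_left

theorem conditionedInvariant_eq_of_map_inf_le (hW0 : 𝒲 0 = B)
    (hWsucc : ∀ k, 𝒲 (k + 1) = B ⊔ Submodule.map F (𝒲 k ⊓ K))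
    (hB : Submodule.map F (B ⊓ K) ≤ B) (k : ℕ) : 𝒲 k = B := by
  induction k with
  | zero => exact hW0
  | succ k ih => rw [hWsucc, ih, sup_eq_left.mpr hB]

theorem conditionedInvariant_eq_of_disjoint (hW0 : 𝒲 0 = B)
    (hWsucc : ∀ k, 𝒲 (k + 1) = B ⊔ Submodule.map F (𝒲 k ⊓ K))
    (hKB : Disjoint K B) (k : ℕ) : 𝒲 k = B := by
  refine conditionedInvariant_eq_of_map_inf_le hW0 hWsucc ?_ k
  rw [hKB.symm.eq_bot, Submodule.map_bot]
  exact bot_le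

theorem controllability_subspace_null_general (hV0 : 𝒱 0 = K)
    (hVsucc : ∀ k, 𝒱 (k + 1) = K ⊓ Submodule.comap F (𝒱 k ⊔ B)) (hW0 : 𝒲 0 = B)
    (hWsucc : ∀ k, 𝒲 (k + 1) = B ⊔ Submodule.map F (𝒲 k ⊓ K))
    (hKB : Disjoint K B) (i j : ℕ) : Disjoint (𝒱 i) (𝒲 j) :=
  hKB.mono (weaklyUnobservable_le hV0 hVsucc i)
    (conditionedInvariant_eq_of_disjoint hW0 hWsucc hKB j).le

end SubspaceIterates

/-- Concluding step in the proof of Proposition 1: for the two subspace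
recursions `𝒱₀ = ker L`, `𝒱_{k+1} = ker L ∩ F⁻¹(𝒱_k + B)` and `𝒲₀ = B`,
`𝒲_{k+1} = B + F(𝒲_k ∩ ker L)`, if `ker L ∩ B = {0}` then `𝒱_d ∩ 𝒲_d = {0}`
(so the largest controllability subspace R* = 𝒱 ∩ 𝒲* contained in ker L is
null). -/
theorem controllability_subspace_null
    {V W : Type*} [AddCommGroup V] [Module ℝ V] [FiniteDimensional ℝ V]
    [AddCommGroup W] [Module ℝ W]
    (d : ℕ) (hd : Module.finrank ℝ V = d)
    (F : V →ₗ[ℝ] V) (L : V →ₗ[ℝ] W) (B : Submodule ℝ V)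
    (𝒱 𝒲 : ℕ → Submodule ℝ V)
    (hV0 : 𝒱 0 = LinearMap.ker L)
    (hVsucc : ∀ k, 𝒱 (k + 1) = LinearMap.ker L ⊓ Submodule.comap F (𝒱 k ⊔ B))
    (hW0 : 𝒲 0 = B)
    (hWsucc : ∀ k, 𝒲 (k + 1) = B ⊔ Submodule.map F (𝒲 k ⊓ LinearMap.ker L))
    (hker : LinearMap.ker L ⊓ B = ⊥) :
    𝒱 d ⊓ 𝒲 d = ⊥ :=
  (controllability_subspace_null_general hV0 hVsucc hW0 hWsucc (disjoint_iff.mpr hker) d d).eq_bot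
end

section
/- Let N, p, m, m_a, p_a be natural numbers and let A : N×N, B : N×m, B_a : N×m_a, C : p×N be real matrices. Let u : ℝ→ℝ^m and a_u : ℝ→ℝ^{m_a} be continuous. Suppose x, x_nom, x_cov : ℝ→ℝ^N are differentiable with, for all t ∈ ℝ, x'(t) = A·x(t) + B·u(t) + B_a·a_u(t), x_nom'(t) = A·x_nom(t) + B·u(t), x_cov'(t) = A·x_cov(t) + B_a·a_u(t), and x(0) = x_nom(0), x_cov(0) = 0. Then for all t ≥ 0: x(t) = x_nom(t) + x_cov(t); consequently, if the sensor attack satisfies D_a·a_y(t) = −C·x_cov(t) for a matrix D_a : p×p_a and function a_y : ℝ→ℝ^{p_a}, then the attacked output y*(t) = C·x(t) + D_a·a_y(t) equals the nominal output C·x_nom(t) for all t ≥ 0. -/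
open Matrix

open Set
open scoped NNReal

section LinearODE

variable {E : Type*} [NormedAddCommGroup E] [NormedSpace ℝ E]

theorem eqOn_Ici_of_isIntegralCurveOn {v : ℝ → E → E} {K : ℝ≥0} {x y : ℝ → E} {t₀ : ℝ}
    (hv : ∀ t ∈ Ici t₀, LipschitzWith K (v t))
    (hx : IsIntegralCurveOn x v (Ici t₀)) (hy : IsIntegralCurveOn y v (Ici t₀))
    (h₀ : x t₀ = y t₀) : EqOn x y (Ici t₀) := fun t ht =>
  have right_deriv {z : ℝ → E} (hz : IsIntegralCurveOn z v (Ici t₀)) :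
      ∀ s ∈ Ico t₀ t, HasDerivWithinAt z (v s (z s)) (Ici s) s :=
    fun s hs => (hz s hs.1).mono (Ici_subset_Ici.2 hs.1)
  ODE_solution_unique_of_mem_Icc_right (s := fun _ => univ)
    (fun s hs => (hv s hs.1).lipschitzOnWith)
    (hx.continuousOn.mono Icc_subset_Ici_self) (right_deriv hx) (fun _ _ => mem_univ _)
    (hy.continuousOn.mono Icc_subset_Ici_self) (right_deriv hy) (fun _ _ => mem_univ _)
    h₀ ⟨ht, le_rfl⟩

theorem isIntegralCurveOn_superposition {F : Type*} [FunLike F E E] [AddMonoidHomClass F E E]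
    {A : F} {w₁ w₂ x₁ x₂ : ℝ → E} {s : Set ℝ}
    (h₁ : IsIntegralCurveOn x₁ (fun t z => A z + w₁ t) s)
    (h₂ : IsIntegralCurveOn x₂ (fun t z => A z + w₂ t) s) :
    IsIntegralCurveOn (x₁ + x₂) (fun t z => A z + w₁ t + w₂ t) s := by
  intro t ht
  have field_add : A (x₁ t + x₂ t) + w₁ t + w₂ t = A (x₁ t) + w₁ t + (A (x₂ t) + w₂ t) := by
    rw [map_add, add_assoc, add_add_add_comm]
  exact ((h₁ t ht).add (h₂ t ht)).congr_deriv field_add.symm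

theorem eqOn_Ici_superposition {A : E →L[ℝ] E} {w₁ w₂ x x₁ x₂ : ℝ → E} {t₀ : ℝ}
    (hx : IsIntegralCurveOn x (fun t z => A z + w₁ t + w₂ t) (Ici t₀))
    (h₁ : IsIntegralCurveOn x₁ (fun t z => A z + w₁ t) (Ici t₀))
    (h₂ : IsIntegralCurveOn x₂ (fun t z => A z + w₂ t) (Ici t₀))
    (h₀ : x t₀ = x₁ t₀ + x₂ t₀) : EqOn x (x₁ + x₂) (Ici t₀) :=
  eqOn_Ici_of_isIntegralCurveOn (K := ‖A‖₊)
    (fun t _ => LipschitzWith.of_dist_le_mul fun y z => by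
      simpa only [add_assoc, dist_add_right] using A.lipschitz.dist_le_mul y z)
    hx (isIntegralCurveOn_superposition h₁ h₂) h₀

end LinearODE

-- `w`, `w_a` and `d` play the roles of `B u`, `B_a a_u` and `D_a a_y`.
theorem covert_attack_undetectable_general {E Y : Type*}
    [NormedAddCommGroup E] [NormedSpace ℝ E] [AddGroup Y]
    (A : E →L[ℝ] E) (C : E →+ Y) {w w_a x x_nom x_cov : ℝ → E} {t₀ : ℝ}
    (hx : IsIntegralCurveOn x (fun t z => A z + w t + w_a t) (Ici t₀))
    (hxnom : IsIntegralCurveOn x_nom (fun t z => A z + w t) (Ici t₀))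
    (hxcov : IsIntegralCurveOn x_cov (fun t z => A z + w_a t) (Ici t₀))
    (h0 : x t₀ = x_nom t₀) (h0c : x_cov t₀ = 0) :
    (∀ t, t₀ ≤ t → x t = x_nom t + x_cov t) ∧
    ∀ d : ℝ → Y, (∀ t, t₀ ≤ t → d t = -C (x_cov t)) →
      ∀ t, t₀ ≤ t → C (x t) + d t = C (x_nom t) := by
  have superposition : EqOn x (x_nom + x_cov) (Ici t₀) :=
    eqOn_Ici_superposition hx hxnom hxcov (by rw [h0, h0c, add_zero])
  refine ⟨superposition, fun d hd t ht => ?_⟩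
  rw [superposition ht, Pi.add_apply, map_add, hd t ht, add_neg_cancel_right]

/-- Covert attack construction (Scenario 2 / Definition 2 of the paper): by
superposition and uniqueness for linear ODEs, the attacked state decomposes as
`x = x_nom + x_cov` for t ≥ 0, and hence a sensor attack satisfying
`D_a a_y = -C x_cov` makes the attacked output `y* = C x + D_a a_y` identical
to the nominal (attack-free) output `C x_nom` for all t ≥ 0. -/
theorem covert_attack_undetectable {N p m m_a p_a : ℕ}
    (A : Matrix (Fin N) (Fin N) ℝ) (B : Matrix (Fin N) (Fin m) ℝ)
    (B_a : Matrix (Fin N) (Fin m_a) ℝ) (C : Matrix (Fin p) (Fin N) ℝ)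
    (D_a : Matrix (Fin p) (Fin p_a) ℝ)
    (u : ℝ → Fin m → ℝ) (a_u : ℝ → Fin m_a → ℝ)
    (hu : Continuous u) (hau : Continuous a_u)
    (x x_nom x_cov : ℝ → Fin N → ℝ)
    (hx : ∀ t : ℝ, HasDerivAt x
      (A.mulVec (x t) + B.mulVec (u t) + B_a.mulVec (a_u t)) t)
    (hxnom : ∀ t : ℝ, HasDerivAt x_nom
      (A.mulVec (x_nom t) + B.mulVec (u t)) t)
    (hxcov : ∀ t : ℝ, HasDerivAt x_cov
      (A.mulVec (x_cov t) + B_a.mulVec (a_u t)) t)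
    (h0 : x 0 = x_nom 0) (h0c : x_cov 0 = 0) :
    (∀ t : ℝ, 0 ≤ t → x t = x_nom t + x_cov t) ∧
    ∀ a_y : ℝ → Fin p_a → ℝ,
      (∀ t : ℝ, D_a.mulVec (a_y t) = -(C.mulVec (x_cov t))) →
      ∀ t : ℝ, 0 ≤ t →
        C.mulVec (x t) + D_a.mulVec (a_y t) = C.mulVec (x_nom t) :=
  (covert_attack_undetectable_general A.mulVecLin.toContinuousLinearMap
    C.mulVecLin.toAddMonoidHom (fun t _ => (hx t).hasDerivWithinAt)
    (fun t _ => (hxnom t).hasDerivWithinAt) (fun t _ => (hxcov t).hasDerivWithinAt)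
    h0 h0c).imp_right fun output_eq a_y hay => output_eq (D_a *ᵥ a_y ·) fun t _ => hay t
end
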